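/- The following three assertions hold: (i) ℓ_θ = pq − p − q + 1 and ℓ_{θ−1} = pq − p − q − 1, so ℓ_θ − ℓ_{θ−1} = 2; (ii) there exists an index j with ℓ_{j+1} = ℓ_j + 1; (iii) the equation ℓ_j − ℓ_{j−1} = 2 has a solution with j < θ if and only if q > p + 1. -/

import Mathlib

/-!
Let `F = p * q - p - q` be the Frobenius number of `S = ⟨p, q⟩`. The symmetry `n ∈ S ↔ F - n ∉ S`
turns a jump `m, m + 2` between consecutive elements of `S` into an *isolated* element
`n = F - (m + 1)` of `S`, one with `n - 1 ∉ S` and `n + 1 ∉ S`. The isolated element `0` gives the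
last jump, from `F - 1` to `F + 1`, so an earlier jump of size two is the same as a positive
isolated element. If `q = p + 1`, exchanging one generator for the other shows that there is none;
if `q > p + 1`, then `p` is isolated. Finally, `1` and `2` are gaps of `S`, so `F - 2` and `F - 1`
both lie in `S`.
-/

open Set

section Consecutive

variable {α β : Type*} [LinearOrder α] [Preorder β]

/-- `a < b` are neighbours in the increasing order of the elements of `s`; for `s = univ` this is
the covering relation `a ⋖ b`. These are the pairs that an increasing enumeration of `s` visits one
after the other. -/
def ConsecutiveIn (s : Set β) (a b : β) : Prop :=
  a ∈ s ∧ b ∈ s ∧ a < b ∧ ∀ c ∈ s, c ∉ Ioo a b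

lemma consecutiveIn_inter_Iic_iff {s : Set β} {a b c : β} :
    ConsecutiveIn (s ∩ Iic c) a b ↔ ConsecutiveIn s a b ∧ b ≤ c := by
  constructor
  · rintro ⟨ha, hb, hab, hgap⟩
    exact ⟨⟨ha.1, hb.1, hab, fun x hx hx' => hgap x ⟨hx, hx'.2.le.trans hb.2⟩ hx'⟩, hb.2⟩
  · rintro ⟨⟨ha, hb, hab, hgap⟩, hbc⟩
    exact ⟨⟨ha, hab.le.trans hbc⟩, ⟨hb, hbc⟩, hab, fun x hx => hgap x hx.1⟩

lemma consecutiveIn_Iic_iff {n a b : β} : ConsecutiveIn (Iic n) a b ↔ a ⋖ b ∧ b ≤ n := by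
  rw [← univ_inter (Iic n), consecutiveIn_inter_Iic_iff]
  simp only [ConsecutiveIn, CovBy, mem_univ, true_and, true_imp_iff, mem_Ioo, not_and]

lemma consecutiveIn_image_iff {f : α → β} {s : Set α} (hf : StrictMonoOn f s) {i j : α}
    (hi : i ∈ s) (hj : j ∈ s) : ConsecutiveIn (f '' s) (f i) (f j) ↔ ConsecutiveIn s i j := by
  simp only [ConsecutiveIn, mem_image_of_mem f hi, mem_image_of_mem f hj, hi, hj, true_and,
    forall_mem_image, hf.lt_iff_lt hi hj, mem_Ioo]
  refine and_congr_right fun _ => forall₂_congr fun k hk => ?_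
  rw [hf.lt_iff_lt hi hk, hf.lt_iff_lt hk hj]

lemma consecutiveIn_add_one_iff {s : Set ℤ} {a : ℤ} :
    ConsecutiveIn s a (a + 1) ↔ a ∈ s ∧ a + 1 ∈ s := by
  simp only [ConsecutiveIn, mem_Ioo]
  grind

lemma consecutiveIn_sub_one_add_one_iff {s : Set ℤ} {n : ℤ} :
    ConsecutiveIn s (n - 1) (n + 1) ↔ n - 1 ∈ s ∧ n ∉ s ∧ n + 1 ∈ s := by
  constructor
  · rintro ⟨hpred, hsucc, -, hgap⟩
    exact ⟨hpred, fun hn => hgap n hn ⟨by lia, by lia⟩, hsucc⟩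
  · rintro ⟨hpred, hn, hsucc⟩
    refine ⟨hpred, hsucc, by lia, fun c hc hc' => hn ?_⟩
    rwa [show n = c by grind]

end Consecutive

section Enumeration

variable {α : Type*} [PartialOrder α] {s : Set α} {c : α} {N : ℕ}

lemma apply_eq_of_image_Iic_eq {f : ℕ → α} (hf : MonotoneOn f (Iic N))
    (himage : f '' Iic N = s ∩ Iic c) (hc : c ∈ s) : f N = c := by
  have hN : IsGreatest (f '' Iic N) (f N) := hf.map_isGreatest isGreatest_Iic
  rw [himage] at hN
  exact hN.unique ⟨⟨hc, le_rfl⟩, fun _ hx => hx.2⟩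

lemma exists_apply_eq_and_apply_succ_eq_iff {f : ℕ → α} (hf : StrictMonoOn f (Iic N))
    (himage : f '' Iic N = s ∩ Iic c) {a b : α} :
    (∃ j < N, f j = a ∧ f (j + 1) = b) ↔ ConsecutiveIn s a b ∧ b ≤ c := by
  rw [← consecutiveIn_inter_Iic_iff, ← himage]
  constructor
  · rintro ⟨j, hj, rfl, rfl⟩
    exact (consecutiveIn_image_iff hf hj.le hj).2
      (consecutiveIn_Iic_iff.2 ⟨Order.covBy_add_one j, hj⟩)
  · intro h
    obtain ⟨⟨i, hi, rfl⟩, ⟨j, hj, rfl⟩, -⟩ := id h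
    obtain ⟨hij, -⟩ := consecutiveIn_Iic_iff.1 ((consecutiveIn_image_iff hf hi hj).1 h)
    obtain rfl := Order.covBy_iff_add_one_eq.1 hij
    exact ⟨i, hj, rfl, rfl⟩

lemma apply_pred_eq_of_consecutiveIn {f : ℕ → α} (hf : StrictMonoOn f (Iic N))
    (himage : f '' Iic N = s ∩ Iic c) {a : α} (ha : ConsecutiveIn s a c) : f (N - 1) = a := by
  have hN : f N = c := apply_eq_of_image_Iic_eq hf.monotoneOn himage ha.2.1
  obtain ⟨j, hj, rfl, hjc⟩ :=
    (exists_apply_eq_and_apply_succ_eq_iff hf himage).2 ⟨ha, le_rfl⟩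
  obtain rfl : j + 1 = N := hf.injOn hj self_mem_Iic (hjc.trans hN.symm)
  rfl

lemma exists_sub_pred_eq_iff {f : ℕ → ℤ} {s : Set ℤ} {c d : ℤ} (hf : StrictMonoOn f (Iic N))
    (himage : f '' Iic N = s ∩ Iic c) (hc : c ∈ s) :
    (∃ j, 1 ≤ j ∧ j < N ∧ f j - f (j - 1) = d) ↔
      ∃ a, ConsecutiveIn s a (a + d) ∧ a + d < c := by
  have hN : f N = c := apply_eq_of_image_Iic_eq hf.monotoneOn himage hc
  have hjump {a b : ℤ} := exists_apply_eq_and_apply_succ_eq_iff hf himage (a := a) (b := b)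
  constructor
  · rintro ⟨j, hj, hjN, hd⟩
    obtain ⟨i, rfl⟩ := Nat.exists_eq_add_of_le' hj
    have hsucc : f (i + 1) = f i + d := by rw [← hd, Nat.add_sub_cancel]; ring
    refine ⟨f i, (hjump.1 ⟨i, by lia, rfl, hsucc⟩).1, ?_⟩
    rw [← hsucc, ← hN]
    exact hf hjN.le self_mem_Iic hjN
  · rintro ⟨a, hcons, hlt⟩
    obtain ⟨j, hj, rfl, hsucc⟩ := hjump.2 ⟨hcons, hlt.le⟩
    have hjN : j + 1 < N := (hf.lt_iff_lt hj self_mem_Iic).1 (by rwa [hsucc, hN])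
    exact ⟨j + 1, by lia, hjN, by rw [Nat.add_sub_cancel, hsucc]; ring⟩

end Enumeration

section PairSemigroup

/-- The numerical semigroup `⟨p, q⟩`, as a submonoid of `ℤ` rather than `ℕ` so that its elements
can be subtracted from the Frobenius number. -/
abbrev pairSemigroup (p q : ℤ) : AddSubmonoid ℤ :=
  AddSubmonoid.closure {p, q}

/-- An isolated element of a set of integers: neither of its two neighbours is in the set.
In `⟨p, q⟩` these mirror the jumps of size two. -/
def IsIsolatedIn (s : Set ℤ) (n : ℤ) : Prop :=
  n ∈ s ∧ n - 1 ∉ s ∧ n + 1 ∉ s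

variable {p q n : ℤ}

lemma mem_pairSemigroup :
    n ∈ pairSemigroup p q ↔ ∃ a b : ℤ, 0 ≤ a ∧ 0 ≤ b ∧ n = a * q + b * p := by
  rw [AddSubmonoid.mem_closure_pair]
  constructor
  · rintro ⟨b, a, rfl⟩
    exact ⟨a, b, by positivity, by positivity, by simp only [nsmul_eq_mul]; ring⟩
  · rintro ⟨a, b, ha, hb, rfl⟩
    lift a to ℕ using ha
    lift b to ℕ using hb
    exact ⟨b, a, by simp only [nsmul_eq_mul]; ring⟩

lemma left_mem_pairSemigroup : p ∈ pairSemigroup p q :=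
  AddSubmonoid.subset_closure (mem_insert p {q})

lemma nonneg_of_mem_pairSemigroup (hp : 0 ≤ p) (hq : 0 ≤ q) (hn : n ∈ pairSemigroup p q) :
    0 ≤ n := by
  obtain ⟨a, b, ha, hb, rfl⟩ := mem_pairSemigroup.1 hn
  positivity

lemma dvd_of_mem_pairSemigroup_of_lt (hp : 0 ≤ p) (hq : 0 ≤ q) (hn : n ∈ pairSemigroup p q)
    (hnq : n < q) : p ∣ n := by
  obtain ⟨a, b, ha, hb, rfl⟩ := mem_pairSemigroup.1 hn
  obtain rfl : a = 0 := by
    by_contra ha0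
    have haq : q ≤ a * q := le_mul_of_one_le_left hq (by lia)
    have hbp : 0 ≤ b * p := mul_nonneg hb hp
    lia
  exact ⟨b, by ring⟩

lemma notMem_pairSemigroup_of_lt (hn : 0 < n) (hnp : n < p) (hpq : p ≤ q) :
    n ∉ pairSemigroup p q := fun hmem =>
  (Int.le_of_dvd hn (dvd_of_mem_pairSemigroup_of_lt (by lia) (by lia) hmem (by lia))).not_gt hnp

lemma exists_eq_mul_add_mul_of_isCoprime (hp : 0 < p) (hcop : IsCoprime p q) (n : ℤ) :
    ∃ a b : ℤ, 0 ≤ a ∧ a < p ∧ n = a * q + b * p := by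
  obtain ⟨u, v, huv⟩ := hcop
  refine ⟨n * v % p, n * u + n * v / p * q, Int.emod_nonneg _ hp.ne',
    Int.emod_lt_of_pos _ hp, ?_⟩
  linear_combination (-n) * huv - q * Int.emod_add_mul_ediv (n * v) p

lemma frobenius_notMem_pairSemigroup (hp : 0 ≤ p) (hq : 0 ≤ q) (hcop : IsCoprime p q) :
    p * q - p - q ∉ pairSemigroup p q := by
  lift p to ℕ using hp
  lift q to ℕ using hq
  rw [AddSubmonoid.mem_closure_pair]
  rintro ⟨a, b, hab⟩
  simp only [nsmul_eq_mul] at hab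
  refine (Nat.isCoprime_iff_coprime.1 hcop).mul_add_mul_ne_mul a.succ_ne_zero b.succ_ne_zero ?_
  zify
  linear_combination hab

lemma frobenius_sub_mem_pairSemigroup_iff (hp : 0 < p) (hq : 0 ≤ q) (hcop : IsCoprime p q) :
    p * q - p - q - n ∈ pairSemigroup p q ↔ n ∉ pairSemigroup p q := by
  constructor
  · intro hsub hn
    apply frobenius_notMem_pairSemigroup hp.le hq hcop
    simpa only [sub_add_cancel] using add_mem hsub hn
  · intro hn
    obtain ⟨a, b, ha, hap, rfl⟩ := exists_eq_mul_add_mul_of_isCoprime hp hcop n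
    have hb : b < 0 := by
      by_contra! hb
      exact hn (mem_pairSemigroup.2 ⟨a, b, ha, hb, rfl⟩)
    exact mem_pairSemigroup.2 ⟨p - 1 - a, -1 - b, by lia, by lia, by ring⟩

lemma consecutiveIn_frobenius_sub_iff (hp : 0 < p) (hq : 0 ≤ q) (hcop : IsCoprime p q) :
    ConsecutiveIn (pairSemigroup p q : Set ℤ) (p * q - p - q - n - 1) (p * q - p - q - n + 1) ↔
      IsIsolatedIn (pairSemigroup p q : Set ℤ) n := by
  rw [consecutiveIn_sub_one_add_one_iff,
    show p * q - p - q - n - 1 = p * q - p - q - (n + 1) by ring,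
    show p * q - p - q - n + 1 = p * q - p - q - (n - 1) by ring]
  simp only [SetLike.mem_coe, frobenius_sub_mem_pairSemigroup_iff hp hq hcop, not_not,
    IsIsolatedIn]
  tauto

lemma isIsolatedIn_pairSemigroup_zero (hp : 1 < p) (hpq : p ≤ q) :
    IsIsolatedIn (pairSemigroup p q : Set ℤ) 0 := by
  refine ⟨zero_mem _, fun h => ?_, notMem_pairSemigroup_of_lt (by lia) (by lia) hpq⟩
  have := nonneg_of_mem_pairSemigroup (by lia) (by lia) h
  lia

lemma isIsolatedIn_pairSemigroup_left (hp : 1 < p) (hpq : p + 1 < q) :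
    IsIsolatedIn (pairSemigroup p q : Set ℤ) p := by
  refine ⟨left_mem_pairSemigroup,
    notMem_pairSemigroup_of_lt (by lia) (by lia) (by lia), fun hsucc => ?_⟩
  have hdvd : p ∣ p + 1 := dvd_of_mem_pairSemigroup_of_lt (by lia) (by lia) hsucc hpq
  have := Int.le_of_dvd one_pos ((dvd_add_right dvd_rfl).1 hdvd)
  lia

lemma eq_zero_of_isIsolatedIn_pairSemigroup_add_one
    (hn : IsIsolatedIn (pairSemigroup p (p + 1) : Set ℤ) n) : n = 0 := by
  obtain ⟨hmem, hpred, hsucc⟩ := hn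
  obtain ⟨a, b, ha, hb, rfl⟩ := mem_pairSemigroup.1 hmem
  obtain rfl : a = 0 := by
    by_contra ha0
    exact hpred (mem_pairSemigroup.2 ⟨a - 1, b + 1, by lia, by lia, by ring⟩)
  obtain rfl : b = 0 := by
    by_contra hb0
    exact hsucc (mem_pairSemigroup.2 ⟨1, b - 1, by lia, by lia, by ring⟩)
  ring

lemma exists_pos_isIsolatedIn_pairSemigroup_iff (hp : 1 < p) (hpq : p < q) :
    (∃ n, 0 < n ∧ IsIsolatedIn (pairSemigroup p q : Set ℤ) n) ↔ p + 1 < q := by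
  constructor
  · rintro ⟨n, hn, hiso⟩
    by_contra hq
    obtain rfl : q = p + 1 := by lia
    exact hn.ne' (eq_zero_of_isIsolatedIn_pairSemigroup_add_one hiso)
  · exact fun hq => ⟨p, by lia, isIsolatedIn_pairSemigroup_left hp hq⟩

lemma exists_consecutiveIn_add_two_iff (hp : 1 < p) (hpq : p < q) (hcop : IsCoprime p q) :
    (∃ m, ConsecutiveIn (pairSemigroup p q : Set ℤ) m (m + 2) ∧ m + 2 < p * q - p - q + 1) ↔
      p + 1 < q := by
  rw [← exists_pos_isIsolatedIn_pairSemigroup_iff hp hpq]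
  simp only [← consecutiveIn_frobenius_sub_iff (zero_lt_one.trans hp) (by lia : 0 ≤ q) hcop]
  constructor
  · rintro ⟨m, hm, hlt⟩
    exact ⟨p * q - p - q - m - 1, by lia, by convert hm using 1 <;> ring⟩
  · rintro ⟨n, hn, hcons⟩
    exact ⟨p * q - p - q - n - 1, by convert hcons using 1; ring, by lia⟩

lemma consecutiveIn_frobenius_sub_one_add_one (hp : 1 < p) (hpq : p < q) (hcop : IsCoprime p q) :
    ConsecutiveIn (pairSemigroup p q : Set ℤ) (p * q - p - q - 1) (p * q - p - q + 1) := by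
  simpa only [sub_zero] using (consecutiveIn_frobenius_sub_iff (by lia) (by lia) hcop).2
    (isIsolatedIn_pairSemigroup_zero hp hpq.le)

lemma consecutiveIn_frobenius_sub_two_sub_one (hp : 2 < p) (hpq : p < q) (hcop : IsCoprime p q) :
    ConsecutiveIn (pairSemigroup p q : Set ℤ) (p * q - p - q - 2) (p * q - p - q - 1) := by
  have hmem {n : ℤ} (hn : 0 < n) (hnp : n < p) : p * q - p - q - n ∈ pairSemigroup p q :=
    (frobenius_sub_mem_pairSemigroup_iff (by lia) (by lia) hcop).2
      (notMem_pairSemigroup_of_lt hn hnp hpq.le)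
  have hsucc : p * q - p - q - 1 = p * q - p - q - 2 + 1 := by ring
  rw [hsucc, consecutiveIn_add_one_iff, ← hsucc]
  exact ⟨hmem two_pos hp, hmem one_pos (by lia)⟩

end PairSemigroup

/-- Lemma 12: (i) `ℓ_θ = pq - p - q + 1` and `ℓ_{θ-1} = pq - p - q - 1`, so
`ℓ_θ - ℓ_{θ-1} = 2`; (ii) there is an index `j` with `ℓ_{j+1} = ℓ_j + 1`;
(iii) `ℓ_j - ℓ_{j-1} = 2` is soluble with `j < θ` iff `q > p + 1`. -/
theorem stmt_14 (p q : ℤ) (hp : 3 ≤ p) (hpq : p < q) (hcop : IsCoprime p q)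
    (θ : ℕ) (hθ : (θ : ℤ) * 2 = (p - 1) * (q - 1))
    (ℓ : ℕ → ℤ)
    (hℓmem : ∀ j : ℕ, j ≤ θ →
      (∃ a b : ℤ, 0 ≤ a ∧ 0 ≤ b ∧ ℓ j = a * q + b * p) ∧
      0 ≤ ℓ j ∧ ℓ j ≤ (p - 1) * (q - 1))
    (hℓsurj : ∀ m : ℤ, (∃ a b : ℤ, 0 ≤ a ∧ 0 ≤ b ∧ m = a * q + b * p) →
      0 ≤ m → m ≤ (p - 1) * (q - 1) → ∃ j : ℕ, j ≤ θ ∧ ℓ j = m)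
    (hℓmono : ∀ i j : ℕ, i < j → j ≤ θ → ℓ i < ℓ j) :
    (ℓ θ = p * q - p - q + 1 ∧ ℓ (θ - 1) = p * q - p - q - 1 ∧
      ℓ θ - ℓ (θ - 1) = 2) ∧
    (∃ j : ℕ, j < θ ∧ ℓ (j + 1) = ℓ j + 1) ∧
    ((∃ j : ℕ, 1 ≤ j ∧ j < θ ∧ ℓ j - ℓ (j - 1) = 2) ↔ p + 1 < q) := by
  have hmono : StrictMonoOn ℓ (Iic θ) := fun i _ j hj hij => hℓmono i j hij hj
  have himage : ℓ '' Iic θ = (pairSemigroup p q : Set ℤ) ∩ Iic (p * q - p - q + 1) := by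
    rw [show p * q - p - q + 1 = (p - 1) * (q - 1) by ring]
    ext m
    constructor
    · rintro ⟨j, hj, rfl⟩
      exact ⟨mem_pairSemigroup.2 (hℓmem j hj).1, (hℓmem j hj).2.2⟩
    · rintro ⟨hm, hle⟩
      exact hℓsurj m (mem_pairSemigroup.1 hm)
        (nonneg_of_mem_pairSemigroup (by lia) (by lia) hm) hle
  have hlast := consecutiveIn_frobenius_sub_one_add_one (by lia) hpq hcop
  have hθ_eq : ℓ θ = p * q - p - q + 1 :=
    apply_eq_of_image_Iic_eq hmono.monotoneOn himage hlast.2.1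
  have hθ_pred : ℓ (θ - 1) = p * q - p - q - 1 := apply_pred_eq_of_consecutiveIn hmono himage hlast
  refine ⟨⟨hθ_eq, hθ_pred, by lia⟩, ?_, ?_⟩
  · obtain ⟨j, hj, hj_eq, hj_succ⟩ := (exists_apply_eq_and_apply_succ_eq_iff hmono himage).2
      ⟨consecutiveIn_frobenius_sub_two_sub_one (by lia) hpq hcop, by lia⟩
    exact ⟨j, hj, by lia⟩
  · rw [exists_sub_pred_eq_iff hmono himage hlast.2.1]
    exact exists_consecutiveIn_add_two_iff (by lia) hpq hcop
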